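/- Weak and strong prompt semantics coincide on strongly connected systems: let L be a strongly connected LTS and φ ∈ L(F_p^∞). Then there exists k ∈ ℕ such that every initialized run ρ satisfies (ρ,k) ⊨ φ, if and only if for every initialized run ρ there exists k ∈ ℕ with (ρ,k) ⊨ φ. -/

import Mathlib

open scoped Classical
open MeasureTheory

/-- A labelled transition system: a finite set of states `S`, an initial state,
a transition relation in which every state has at least one successor, and a
labeling of states by sets of atomic propositions. -/
structure LTS (S AP : Type) where
  init : S
  T : S → S → Prop
  lbl : S → Set AP
  succ_nonempty : ∀ s : S, ∃ t : S, T s t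

variable {S AP : Type}

/-- A run of an LTS: an infinite sequence of states following the transitions. -/
def IsRun (L : LTS S AP) (ρ : ℕ → S) : Prop := ∀ i : ℕ, L.T (ρ i) (ρ (i + 1))

/-- The shifted run `ρ[i..]`. -/
def shift (ρ : ℕ → S) (i : ℕ) : ℕ → S := fun n => ρ (n + i)

/-- Formulas of the prompt Muller fragment `L(F_p^∞)`:
`φ ::= α | ¬α | φ ∨ φ | φ ∧ φ | F_p^∞ φ`. -/
inductive PM (AP : Type) : Type where
  | pos : AP → PM AP
  | neg : AP → PM AP
  | or : PM AP → PM AP → PM AP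
  | and : PM AP → PM AP → PM AP
  | finf : PM AP → PM AP

/-- Satisfaction `(ρ, k) ⊨ φ` of a prompt Muller formula by a run at bound `k`. -/
def Sat (L : LTS S AP) : PM AP → (ℕ → S) → ℕ → Prop
  | .pos a, ρ, _ => a ∈ L.lbl (ρ 0)
  | .neg a, ρ, _ => a ∉ L.lbl (ρ 0)
  | .or φ ψ, ρ, k => Sat L φ ρ k ∨ Sat L ψ ρ k
  | .and φ ψ, ρ, k => Sat L φ ρ k ∧ Sat L ψ ρ k
  | .finf φ, ρ, k => ∀ i : ℕ, ∃ j ≤ k, Sat L φ (shift ρ (i + j)) k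

/-- Reachability along transitions. -/
def Reachable (L : LTS S AP) : S → S → Prop := Relation.ReflTransGen L.T

/-- A strongly connected component: an equivalence class of mutual reachability. -/
def IsSCC (L : LTS S AP) (C : Set S) : Prop :=
  ∃ s : S, C = {t : S | Reachable L s t ∧ Reachable L t s}

/-- A bottom strongly connected component: an SCC closed under transitions. -/
def IsBSCC (L : LTS S AP) (C : Set S) : Prop :=
  IsSCC L C ∧ ∀ s ∈ C, ∀ t : S, L.T s t → t ∈ C

/-!
Satisfaction at a fixed bound `k` is a closed condition on runs, for the product of the discrete
topologies. If every initialized run satisfies `φ` at some bound, the initialized runs are therefore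
covered by countably many closed sets, and the Baire category theorem gives a bound `k` and a finite
path `w` such that all initialized runs extending `w` satisfy `φ` at `k`. Any initialized run `σ` is
a suffix of such a run `τ`: after `w`, return to the initial state and continue with `σ`. Since
`F_p^∞ ψ` passes to suffixes and the literals outside the scope of an `F_p^∞` only look at the first
state, which `τ` and `σ` share, `φ` passes from `τ` to `σ`.
-/

theorem exists_inter_cylinder_subset_of_subset_iUnion {E : ℕ → Type*}
    [∀ n, TopologicalSpace (E n)] [∀ n, DiscreteTopology (E n)] {ι : Sort*} [Countable ι]
    {A : Set (∀ n, E n)} (hA : IsClosed A) (hne : A.Nonempty) {F : ι → Set (∀ n, E n)}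
    (hF : ∀ i, IsClosed (F i)) (hAF : A ⊆ ⋃ i, F i) :
    ∃ i, ∃ x ∈ A, ∃ n, A ∩ PiNat.cylinder x n ⊆ F i := by
  have := hA.isCompletelyMetrizableSpace
  have := hne.to_subtype
  have hcover : ⋃ i, ((↑) ⁻¹' F i : Set A) = Set.univ := by
    rw [← Set.preimage_iUnion, Set.preimage_eq_univ_iff, Subtype.range_coe]
    exact hAF
  obtain ⟨i, x, hx⟩ :=
    nonempty_interior_of_iUnion_of_closed (fun i => (hF i).preimage continuous_subtype_val) hcover
  obtain ⟨U, hU, hxU, hUF⟩ :=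
    mem_nhdsWithin.1 (preimage_coe_mem_nhds_subtype.1 (mem_interior_iff_mem_nhds.1 hx))
  obtain ⟨_, ⟨y, n, rfl⟩, hxy, hyU⟩ :=
    (PiNat.isTopologicalBasis_cylinders E).exists_subset_of_mem_open hxU hU
  rw [← PiNat.mem_cylinder_iff_eq.1 hxy] at hyU
  exact ⟨i, x, x.2, n, fun z ⟨hzA, hz⟩ => hUF ⟨hyU hz, hzA⟩⟩

theorem shift_shift (ρ : ℕ → S) (m n : ℕ) : shift (shift ρ m) n = shift ρ (m + n) := by
  funext l
  simp only [shift, Nat.add_assoc, Nat.add_comm n m]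

theorem isRun_shift {L : LTS S AP} {ρ : ℕ → S} (hρ : IsRun L ρ) (n : ℕ) :
    IsRun L (shift ρ n) := fun i => by
  simpa only [shift, Nat.add_right_comm] using hρ (i + n)

/-- The sequence `s, σ 0, σ 1, …`, used to extend runs backwards along transitions. -/
def prepend (s : S) (σ : ℕ → S) : ℕ → S
  | 0 => s
  | n + 1 => σ n

theorem isRun_prepend {L : LTS S AP} {s : S} {σ : ℕ → S} (hs : L.T s (σ 0)) (hσ : IsRun L σ) :
    IsRun L (prepend s σ)
  | 0 => hs
  | n + 1 => hσ n

theorem reachable_of_isRun {L : LTS S AP} {ρ : ℕ → S} (hρ : IsRun L ρ) :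
    ∀ n, Reachable L (ρ 0) (ρ n)
  | 0 => .refl
  | n + 1 => (reachable_of_isRun hρ n).tail (hρ n)

theorem exists_isRun_shift_eq_of_reachable {L : LTS S AP} {s : S} {σ : ℕ → S} (hσ : IsRun L σ)
    (hs : Reachable L s (σ 0)) :
    ∃ τ, IsRun L τ ∧ τ 0 = s ∧ ∃ d, shift τ d = σ := by
  induction hs using Relation.ReflTransGen.head_induction_on with
  | refl => exact ⟨σ, hσ, rfl, 0, rfl⟩
  | @head s t hst _ ih =>
    obtain ⟨τ, hτ, rfl, d, hd⟩ := ih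
    exact ⟨prepend s τ, isRun_prepend hst hτ, rfl, d + 1, hd⟩

theorem exists_isRun_mem_cylinder_shift_eq {L : LTS S AP} {ρ σ : ℕ → S} (hρ : IsRun L ρ)
    (hσ : IsRun L σ) (n : ℕ) (hreach : Reachable L (ρ n) (σ 0)) :
    ∃ τ, IsRun L τ ∧ τ ∈ PiNat.cylinder ρ (n + 1) ∧ ∃ d, shift τ d = σ := by
  induction n generalizing ρ with
  | zero =>
    obtain ⟨τ, hτ, h0, hd⟩ := exists_isRun_shift_eq_of_reachable hσ hreach
    refine ⟨τ, hτ, fun i hi => ?_, hd⟩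
    rwa [Nat.lt_one_iff.1 hi]
  | succ n ih =>
    obtain ⟨τ, hτ, hτρ, d, hd⟩ := ih (isRun_shift hρ 1) hreach
    have hstep : L.T (ρ 0) (τ 0) := by
      rw [hτρ 0 n.succ_pos]
      exact hρ 0
    refine ⟨prepend (ρ 0) τ, isRun_prepend hstep hτ, ?_, d + 1, hd⟩
    rintro (_ | i) hi
    · rfl
    · exact hτρ i (Nat.lt_of_succ_lt_succ hi)

/-- The runs of `L` that start in its initial state. -/
def initializedRuns (L : LTS S AP) : Set (ℕ → S) := {ρ | IsRun L ρ ∧ ρ 0 = L.init}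

theorem initializedRuns_nonempty (L : LTS S AP) : (initializedRuns L).Nonempty := by
  choose next hnext using L.succ_nonempty
  refine ⟨fun n => next^[n] L.init, fun i => ?_, rfl⟩
  simpa only [Function.iterate_succ_apply'] using hnext _

theorem sat_shift {L : LTS S AP} {φ : PM AP} {ρ : ℕ → S} {k n : ℕ} (h0 : ρ n = ρ 0)
    (h : Sat L φ ρ k) : Sat L φ (shift ρ n) k := by
  have hhead : shift ρ n 0 = ρ 0 := by rw [shift, Nat.zero_add, h0]
  induction φ with
  | pos a | neg a => simpa only [Sat, hhead] using h
  | or φ ψ ihφ ihψ => exact h.imp ihφ ihψ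
  | and φ ψ ihφ ihψ => exact h.imp ihφ ihψ
  | finf φ _ =>
    intro i
    obtain ⟨j, hj, hsat⟩ := h (n + i)
    refine ⟨j, hj, ?_⟩
    rwa [shift_shift, ← Nat.add_assoc]

section Topology

variable [TopologicalSpace S]

theorem continuous_shift (n : ℕ) : Continuous fun ρ : ℕ → S => shift ρ n :=
  continuous_pi fun i => continuous_apply (i + n)

variable [DiscreteTopology S]

theorem isClosed_initializedRuns (L : LTS S AP) : IsClosed (initializedRuns L) := by
  have hstep (i : ℕ) : IsClosed {ρ : ℕ → S | L.T (ρ i) (ρ (i + 1))} :=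
    (isClosed_discrete {p : S × S | L.T p.1 p.2}).preimage
      (by fun_prop : Continuous fun ρ : ℕ → S => (ρ i, ρ (i + 1)))
  have hrun : IsClosed {ρ : ℕ → S | IsRun L ρ} := by
    simp only [IsRun, Set.ofPred_forall]
    exact isClosed_iInter hstep
  have hinit : IsClosed {ρ : ℕ → S | ρ 0 = L.init} :=
    isClosed_eq (continuous_apply 0) continuous_const
  exact hrun.and hinit

theorem isClosed_setOfPred_sat (L : LTS S AP) (φ : PM AP) (k : ℕ) :
    IsClosed {ρ : ℕ → S | Sat L φ ρ k} := by
  have hhead : Continuous fun ρ : ℕ → S => ρ 0 := continuous_apply 0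
  induction φ with
  | pos a => exact (isClosed_discrete {s | a ∈ L.lbl s}).preimage hhead
  | neg a => exact (isClosed_discrete {s | a ∉ L.lbl s}).preimage hhead
  | or φ ψ ihφ ihψ => exact ihφ.union ihψ
  | and φ ψ ihφ ihψ => exact ihφ.and ihψ
  | finf φ ih =>
    have hset : {ρ : ℕ → S | Sat L φ.finf ρ k} =
        ⋂ i, ⋃ j ∈ Set.Iic k, {ρ | Sat L φ (shift ρ (i + j)) k} := by
      ext ρ
      simp only [Sat, Set.mem_ofPred_eq, Set.mem_iInter, Set.mem_iUnion, Set.mem_Iic, exists_prop]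
    rw [hset]
    exact isClosed_iInter fun i => (Set.finite_Iic k).isClosed_biUnion fun j _ =>
      ih.preimage (continuous_shift (i + j))

end Topology

theorem weak_eq_strong_strongly_connected_general (L : LTS S AP)
    (hreturn : ∀ s, Reachable L L.init s → Reachable L s L.init) (φ : PM AP) :
    (∃ k : ℕ, ∀ ρ : ℕ → S, IsRun L ρ → ρ 0 = L.init → Sat L φ ρ k) ↔
    (∀ ρ : ℕ → S, IsRun L ρ → ρ 0 = L.init → ∃ k : ℕ, Sat L φ ρ k) := by
  refine ⟨fun ⟨k, hk⟩ ρ hρ h0 => ⟨k, hk ρ hρ h0⟩, fun hweak => ?_⟩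
  let _ : TopologicalSpace S := ⊥
  have : DiscreteTopology S := ⟨rfl⟩
  obtain ⟨k, ρ, ⟨hρ, hρ0⟩, n, hcyl⟩ := exists_inter_cylinder_subset_of_subset_iUnion
    (isClosed_initializedRuns L) (initializedRuns_nonempty L) (isClosed_setOfPred_sat L φ)
    fun ρ hρ => Set.mem_iUnion.2 (hweak ρ hρ.1 hρ.2)
  refine ⟨k, fun σ hσ hσ0 => ?_⟩
  have hreach : Reachable L (ρ n) (σ 0) := by
    rw [hσ0]
    exact hreturn _ (hρ0 ▸ reachable_of_isRun hρ n)
  obtain ⟨τ, hτ, hτρ, d, rfl⟩ := exists_isRun_mem_cylinder_shift_eq hρ hσ n hreach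
  have hτ0 : τ 0 = L.init := (hτρ 0 n.succ_pos).trans hρ0
  have hτsat : Sat L φ τ k := hcyl ⟨⟨hτ, hτ0⟩, PiNat.cylinder_anti ρ n.le_succ hτρ⟩
  have hτd : τ d = τ 0 := by rw [hτ0, ← hσ0, shift, Nat.zero_add]
  exact sat_shift hτd hτsat

/-- Weak and strong prompt semantics coincide on strongly connected
systems: for `L` strongly connected and `φ ∈ L(F_p^∞)`, there is `k` such that every
initialized run satisfies `(ρ,k) ⊨ φ` iff every initialized run satisfies `(ρ,k) ⊨ φ`
for some `k` (depending on the run). -/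
theorem weak_eq_strong_strongly_connected [Fintype S] (L : LTS S AP)
    (hsc : ∀ s t : S, Reachable L s t) (φ : PM AP) :
    (∃ k : ℕ, ∀ ρ : ℕ → S, IsRun L ρ → ρ 0 = L.init → Sat L φ ρ k) ↔
    (∀ ρ : ℕ → S, IsRun L ρ → ρ 0 = L.init → ∃ k : ℕ, Sat L φ ρ k) :=
  weak_eq_strong_strongly_connected_general L (fun s _ => hsc s L.init) φ
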